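/- Let n, d, k be integers with d ≥ 3 and 8 ≤ k ≤ n. Let A ⊆ [2^n]^d be nonempty with Vol(A) ≤ 1/2, and let m(A) ∈ ℕ satisfy 2^{−m(A)} < Vol(A)^{1/d} ≤ 2^{−m(A)+1}. Then E[|μ_k(A)|] ≤ 2^{10}·2^{−|m(A)−k|/2}·Per(A). -/

import Mathlib

open MeasureTheory Finset

noncomputable section

/-- Points of the grid `[2^n]^d` (coordinates taken 0-based). -/
abbrev GridPt (n d : ℕ) := Fin d → Fin (2^n)

/-- Normalized counting "volume" of a subset of the grid: `Vol(A) = 2^{-nd}|A|`. -/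
def Vol (n d : ℕ) (A : Finset (GridPt n d)) : ℝ := (A.card : ℝ) / 2^(n*d)

/-- The ℓ1 metric on the grid. -/
def gdist {n d : ℕ} (u v : GridPt n d) : ℝ := ∑ i, |((u i : ℕ) : ℝ) - ((v i : ℕ) : ℝ)|

/-- Indices of the dyadic cubes in `D_k`. -/
abbrev CubeIdx (d k : ℕ) := Fin d → Fin (2^k)

/-- The dyadic cube of side-cardinality `2^(n-k)` indexed by `j ∈ {0,…,2^k-1}^d`. -/
def cube (n d k : ℕ) (j : CubeIdx d k) : Finset (GridPt n d) :=
  Finset.univ.filter (fun x => ∀ i, (x i : ℕ) / 2^(n-k) = (j i : ℕ))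

/-- `p = 2^{-4d}`. -/
def pp (d : ℕ) : ℝ := ((2:ℝ)^(4*d))⁻¹

/-- The law of each `X_Q`: takes values `±1` with probability `p/2` each
and `0` with probability `1-p`. -/
def stepMeasure (d : ℕ) : Measure ℝ :=
  (Real.toNNReal (pp d / 2)) • Measure.dirac (1:ℝ)
  + (Real.toNNReal (pp d / 2)) • Measure.dirac (-1:ℝ)
  + (Real.toNNReal (1 - pp d)) • Measure.dirac (0:ℝ)

instance (d : ℕ) : IsFiniteMeasure (stepMeasure d) := by
  unfold stepMeasure; infer_instance

/-- The joint law of the i.i.d. family `{X_Q}_{Q ∈ D_k}`; a sample point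
`ω : CubeIdx d k → ℝ` records the values `X_Q = ω Q`. -/
def prodMeasure (d k : ℕ) : Measure (CubeIdx d k → ℝ) :=
  Measure.pi fun _ => stepMeasure d

/-- `μ_k(A) = ∑_{Q ∈ D_k} p⁻¹ 2^k X_Q Vol(A ∩ Q)`, as a function of the sample point `ω`. -/
def muMeas (n d k : ℕ) (A : Finset (GridPt n d)) (ω : CubeIdx d k → ℝ) : ℝ :=
  ∑ j : CubeIdx d k, (pp d)⁻¹ * 2^k * ω j * Vol n d (A ∩ cube n d k j)

/-- Ordered edges of the grid graph (each unordered edge `{u, u+e_i}` listed exactly once,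
in the increasing direction). -/
def edgePairs (n d : ℕ) : Finset (GridPt n d × GridPt n d) :=
  Finset.univ.filter (fun e =>
    ∃ i, ((e.2 i : ℕ) = (e.1 i : ℕ) + 1) ∧ ∀ j, j ≠ i → e.2 j = e.1 j)

/-- The edge boundary `∂A` of a subset `A` of the grid. -/
def bdry (n d : ℕ) (A : Finset (GridPt n d)) : Finset (GridPt n d × GridPt n d) :=
  (edgePairs n d).filter (fun e => (e.1 ∈ A ∧ e.2 ∉ A) ∨ (e.1 ∉ A ∧ e.2 ∈ A))

/-- The normalized perimeter `Per(A) = (1/d)·2^{-n(d-1)}·|∂A|`. -/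
def Per (n d : ℕ) (A : Finset (GridPt n d)) : ℝ :=
  (1/(d:ℝ)) * ((2:ℝ)^(n*(d-1)))⁻¹ * ((bdry n d A).card : ℝ)


set_option maxHeartbeats 1000000 in
theorem proj_ineq {α : Type*} [DecidableEq α] [Fintype α] (a0 : α) (d : ℕ) :
    ∀ (A : Finset (Fin d → α)), A.Nonempty → ∀ a : ℝ, 0 < a → a ^ d = (A.card : ℝ) →
      (d : ℝ) * a ^ d ≤ a * ∑ i : Fin d, ((A.image (fun x => Function.update x i a0)).card : ℝ) := by
  induction d with
  | zero => intro A hA a ha h; simp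
  | succ d ih =>
    intro A hA a ha h
    rw [Fin.sum_univ_succ]
    set P : ℝ := ((A.image (fun x => Function.update x 0 a0)).card : ℝ) with hP
    have hP1 : (1:ℝ) ≤ P := by
      rw [hP]; exact_mod_cast (Finset.card_pos.2 (hA.image _))
    rcases Nat.eq_zero_or_pos d with hd | hd
    · subst hd
      simp
      nlinarith
    set s : ℝ := P ^ ((1:ℝ)/(d:ℝ)) with hs
    have hs0 : 0 < s := Real.rpow_pos_of_pos (by linarith) _
    have hsd : s ^ d = P := by
      rw [hs, one_div]; exact Real.rpow_inv_natCast_pow (by linarith) hd.ne'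
    let B : α → Finset (Fin d → α) := fun t => Finset.univ.filter (fun y => (Fin.cons t y : Fin (d+1) → α) ∈ A)
    have hBP : ∀ t, ((B t).card : ℝ) ≤ P := by
      intro t
      rw [hP]
      norm_cast
      refine Finset.card_le_card_of_injOn (fun y => (Fin.cons a0 y : Fin (d+1) → α)) ?_ ?_
      · intro y hy
        simp only [B, Finset.coe_filter, Finset.mem_univ, true_and, Set.mem_ofPred_eq] at hy
        simp only [Finset.coe_image, Set.mem_image, Finset.mem_coe]
        exact ⟨_, hy, by simp [Fin.update_cons_zero]⟩
      · intro y _ z _ h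
        exact (Fin.cons_right_injective _) h
    have hBt : ∀ t, (d:ℝ) * ((B t).card : ℝ) ≤ s * ∑ i : Fin d, (((B t).image (fun x => Function.update x i a0)).card : ℝ) := by
      intro t
      rcases (B t).eq_empty_or_nonempty with h0 | h0
      · rw [h0]; simp
      · have hc : (0:ℝ) < ((B t).card : ℝ) := by exact_mod_cast h0.card_pos
        have e : (((B t).card : ℝ) ^ ((1:ℝ)/(d:ℝ))) ^ d = ((B t).card : ℝ) := by
          rw [one_div]; exact Real.rpow_inv_natCast_pow hc.le hd.ne'
        have := ih (B t) h0 _ (Real.rpow_pos_of_pos hc ((1:ℝ)/(d:ℝ))) e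
        rw [e] at this
        refine this.trans ?_
        exact mul_le_mul_of_nonneg_right (Real.rpow_le_rpow hc.le (hBP t) (by positivity))
          (Finset.sum_nonneg fun i _ => Nat.cast_nonneg _)
    have hsumA : (A.card : ℝ) = ∑ t, ((B t).card : ℝ) := by
      norm_cast
      rw [Finset.card_eq_sum_card_fiberwise (f := fun x => x 0) (t := Finset.univ) (by intro x _; simp)]
      refine Finset.sum_congr rfl fun t _ => ?_
      refine Finset.card_nbij' (fun x => Fin.tail x) (fun y => (Fin.cons t y : Fin (d+1) → α)) ?_ ?_ ?_ ?_
      · intro x hx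
        simp only [Finset.coe_filter, Set.mem_ofPred_eq] at hx
        obtain ⟨h1, rfl⟩ := hx
        simpa [B] using h1
      · intro y hy
        simpa [B] using hy
      · intro x hx
        simp only [Finset.coe_filter, Set.mem_ofPred_eq] at hx
        obtain ⟨h1, rfl⟩ := hx
        simp
      · intro y hy; simp
    have hproj : ∀ i : Fin d, ∑ t, (((B t).image (fun x => Function.update x i a0)).card : ℝ) ≤
        ((A.image (fun x => Function.update x i.succ a0)).card : ℝ) := by
      intro i
      norm_cast
      rw [Finset.card_eq_sum_card_fiberwise (s := A.image (fun x => Function.update x i.succ a0)) (f := fun x => x 0) (t := Finset.univ) (by intro x _; simp)]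
      refine Finset.sum_le_sum fun t _ => ?_
      refine Finset.card_le_card_of_injOn (fun y => (Fin.cons t y : Fin (d+1) → α)) ?_ ?_
      · intro y hy
        simp only [Finset.coe_image, Set.mem_image, Finset.mem_coe, B, Finset.mem_filter, Finset.mem_univ, true_and] at hy
        obtain ⟨z, hz, rfl⟩ := hy
        simp only [Finset.coe_filter, Finset.mem_image, Set.mem_ofPred_eq, Fin.cons_zero, and_true]
        exact ⟨_, hz, by rw [Fin.cons_update]⟩
      · intro y _ z _ h
        exact (Fin.cons_right_injective _) h
    have h1 : (d:ℝ) * a ^ (d+1) ≤ s * ∑ i : Fin d, ((A.image (fun x => Function.update x i.succ a0)).card : ℝ) := by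
      rw [h, hsumA, Finset.mul_sum]
      refine (Finset.sum_le_sum fun t _ => hBt t).trans ?_
      rw [← Finset.mul_sum, Finset.sum_comm]
      exact mul_le_mul_of_nonneg_left (Finset.sum_le_sum fun i _ => hproj i) hs0.le
    set S := ∑ i : Fin d, ((A.image (fun x => Function.update x i.succ a0)).card : ℝ)
    have h2 : ((d:ℝ)+1) * a ^ d * s ≤ s ^ (d+1) + d * a^(d+1) := by
      have := one_add_mul_sub_le_pow (a := s / a) (n := d+1) (by have : 0 < s / a := by positivity
                                                                 linarith)
      have h3 : (1 + ((d+1:ℕ):ℝ) * (s / a - 1)) * a^(d+1) ≤ (s/a)^(d+1) * a^(d+1) := by gcongr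
      rw [← mul_pow, div_mul_cancel₀ _ ha.ne'] at h3
      have h4 : (1 + ((d+1:ℕ):ℝ) * (s / a - 1)) * a^(d+1) = ((d:ℝ)+1) * a ^ d * s - d * a^(d+1) := by
        push_cast; field_simp; ring
      linarith
    have h5 : s * (((d:ℝ)+1) * a ^ d) ≤ s * (P + S) := by
      rw [← hsd]
      calc s * (((d:ℝ)+1) * a ^ d) = ((d:ℝ)+1) * a ^ d * s := by ring
        _ ≤ _ := h2
        _ ≤ s^(d+1) + s * S := by linarith
        _ = _ := by ring
    have h6 := le_of_mul_le_mul_left h5 hs0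
    push_cast
    calc ((d:ℝ)+1) * a^(d+1) = a * (((d:ℝ)+1) * a ^ d) := by ring
      _ ≤ _ := mul_le_mul_of_nonneg_left h6 ha.le

theorem exists_change (N : ℕ) (p : Fin N → Prop) (s t : Fin N) (hs : p s) (ht : ¬ p t) :
    ∃ u v : Fin N, (v : ℕ) = (u:ℕ) + 1 ∧ ((p u ∧ ¬ p v) ∨ (¬ p u ∧ p v)) := by
  by_contra hcon
  push Not at hcon
  have key : ∀ j : ℕ, ∀ hj : j < N, (p ⟨j, hj⟩ ↔ p ⟨0, by omega⟩) := by
    intro j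
    induction j with
    | zero => intro hj; rfl
    | succ j ih =>
      intro hj
      have := hcon ⟨j, by omega⟩ ⟨j+1, hj⟩ rfl
      rw [← ih (by omega)]
      tauto
  have h1 := key s s.2
  have h2 := key t t.2
  simp only [Fin.eta] at h1 h2
  tauto

theorem bdry_lower (n d : ℕ) (A : Finset (GridPt n d)) (a0 : Fin (2^n)) :
    ∑ i : Fin d, ((A.image (fun x => Function.update x i a0)).card : ℝ)
      ≤ (bdry n d A).card + d * ((A.card : ℝ) / 2^n) := by
  classical
  let π : Fin d → Finset (GridPt n d) := fun i => A.image (fun x => Function.update x i a0)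
  let F : Fin d → Finset (GridPt n d) := fun i => (π i).filter (fun z => ∀ t, Function.update z i t ∈ A)
  let G : Fin d → Finset (GridPt n d) := fun i => (π i).filter (fun z => ¬ ∀ t, Function.update z i t ∈ A)
  have hFG : ∀ i, ((π i).card : ℝ) = (F i).card + (G i).card := by
    intro i
    norm_cast
    exact (Finset.card_filter_add_card_filter_not _).symm
  have hπ : ∀ i, ∀ z ∈ π i, z i = a0 := by
    intro i z hz
    simp only [π, Finset.mem_image] at hz
    obtain ⟨x, _, rfl⟩ := hz
    simp
  have hF : ∀ i, ((F i).card : ℝ) ≤ (A.card : ℝ) / 2^n := by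
    intro i
    rw [le_div_iff₀ (by positivity)]
    have : (F i ×ˢ (Finset.univ : Finset (Fin (2^n)))).card ≤ A.card := by
      refine Finset.card_le_card_of_injOn (fun q => Function.update q.1 i q.2) ?_ ?_
      · intro q hq
        simp only [F, Finset.coe_product, Set.mem_prod, Finset.mem_coe, Finset.mem_filter] at hq
        exact hq.1.2 q.2
      · rintro ⟨z, t⟩ hq ⟨z', t'⟩ hq' h
        simp only [F, Finset.coe_product, Set.mem_prod, Finset.mem_coe, Finset.mem_filter] at hq hq' h
        have h1 := hπ i z hq.1.1
        have h2 := hπ i z' hq'.1.1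
        have e1 : t = t' := by simpa using congrFun h i
        have e2 : z = z' := by
          funext j
          by_cases hj : j = i
          · subst hj; rw [h1, h2]
          · have := congrFun h j
            simpa [Function.update_of_ne hj] using this
        rw [e1, e2]
    rw [Finset.card_product] at this
    simp only [Finset.card_univ, Fintype.card_fin] at this
    exact_mod_cast this
  have hG : ∑ i, (G i).card ≤ (bdry n d A).card := by
    rw [← Finset.card_sigma]
    refine Finset.card_le_card_of_forall_subsingleton
      (fun (q : Σ _ : Fin d, GridPt n d) e => ((e.2 q.1 : ℕ) = (e.1 q.1 : ℕ) + 1) ∧ (∀ j, j ≠ q.1 → e.2 j = e.1 j) ∧ q.2 q.1 = a0 ∧ ∀ j, j ≠ q.1 → q.2 j = e.1 j) ?_ ?_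
    · rintro ⟨i, z⟩ hz
      simp only [G, Finset.mem_sigma, Finset.mem_univ, true_and, Finset.mem_filter] at hz
      obtain ⟨hz, hn⟩ := hz
      have hz0 := hπ i z hz
      push Not at hn
      obtain ⟨t, ht⟩ := hn
      simp only [π, Finset.mem_image] at hz
      obtain ⟨x, hx, rfl⟩ := hz
      obtain ⟨u, v, huv, hc⟩ := exists_change (2^n) (fun t => Function.update x i t ∈ A) (x i) t
        (by simpa using hx) (by simpa using ht)
      refine ⟨(Function.update x i u, Function.update x i v), ?_, ?_⟩
      · simp only [bdry, edgePairs, Finset.mem_filter, Finset.mem_univ, true_and]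
        exact ⟨⟨i, by simpa using huv, fun j hj => by simp [hj]⟩, hc⟩
      · refine ⟨by simpa using huv, fun j hj => by simp [hj], by simp, fun j hj => by simp [hj]⟩
    · rintro e he ⟨i, z⟩ ⟨_, h1, h2, h3, h4⟩ ⟨i', z'⟩ ⟨_, h1', h2', h3', h4'⟩
      dsimp only at *
      have : i = i' := by
        by_contra hne
        have := h2' i hne
        rw [this] at h1
        omega
      subst this
      congr 1
      funext j
      by_cases hj : j = i
      · subst hj; rw [h3, h3']
      · rw [h4 j hj, h4' j hj]
  have hG' : ∑ i, ((G i).card : ℝ) ≤ (bdry n d A).card := by exact_mod_cast hG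
  calc ∑ i : Fin d, ((π i).card : ℝ) = ∑ i, ((G i).card : ℝ) + ∑ i, ((F i).card : ℝ) := by
        rw [← Finset.sum_add_distrib]; exact Finset.sum_congr rfl fun i _ => by rw [hFG i, add_comm]
    _ ≤ (bdry n d A).card + ∑ i : Fin d, (A.card : ℝ) / 2^n := by
        gcongr with i; exact hF i
    _ = _ := by simp

theorem per_lower (n d : ℕ) (hd : 1 ≤ d) (A : Finset (GridPt n d)) (hA : A.Nonempty) (v : ℝ) (hv : 0 < v)
    (hvd : v ^ d = Vol n d A) : v ^ (d-1) * (1 - v) ≤ Per n d A := by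
  obtain ⟨e, rfl⟩ : ∃ e, d = e + 1 := ⟨d-1, by omega⟩
  have a0 : Fin (2^n) := ⟨0, by positivity⟩
  have hN : (0:ℝ) < 2^n := by positivity
  have hc : (v * 2^n) ^ (e+1) = (A.card : ℝ) := by
    rw [mul_pow, hvd, Vol, ← pow_mul]; field_simp
  have h1 := proj_ineq a0 (e+1) A hA (v * 2^n) (by positivity) hc
  have h2 := bdry_lower n (e+1) A a0
  set S := ∑ i : Fin (e+1), ((A.image (fun x => Function.update x i a0)).card : ℝ)
  have h3 : ((e+1:ℕ):ℝ) * (v * 2^n)^e ≤ S := by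
    refine le_of_mul_le_mul_left (a := v * 2^n) ?_ (by positivity)
    calc _ = _ := by ring
      _ ≤ _ := h1
  rw [← hc] at h2
  have h4 : ((e+1:ℕ):ℝ) * (v * 2^n)^e - ((e+1:ℕ):ℝ) * ((v * 2^n) ^ (e+1) / 2^n) ≤ ((bdry n (e+1) A).card:ℝ) := by linarith
  unfold Per
  simp only [Nat.add_sub_cancel]
  have he : (0:ℝ) < ((e+1:ℕ):ℝ) := by positivity
  calc v^e * (1 - v) = 1 / ((e+1:ℕ):ℝ) * ((2:ℝ)^(n*e))⁻¹ * (((e+1:ℕ):ℝ) * (v * 2^n)^e - ((e+1:ℕ):ℝ) * ((v * 2^n) ^ (e+1) / 2^n)) := by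
        rw [pow_mul, mul_pow, mul_pow]; field_simp; ring
    _ ≤ _ := by gcongr

theorem pp_pos (d : ℕ) : 0 < pp d := by unfold pp; positivity

theorem pp_le_one (d : ℕ) : pp d ≤ 1 := by
  unfold pp
  exact inv_le_one_of_one_le₀ (one_le_pow₀ (by norm_num))

instance stepMeasure_prob (d : ℕ) : IsProbabilityMeasure (stepMeasure d) := by
  constructor
  have h1 := pp_pos d
  have h2 := pp_le_one d
  have : (Real.toNNReal (pp d / 2)) + (Real.toNNReal (pp d / 2)) + (Real.toNNReal (1 - pp d)) = 1 := by
    rw [← Real.toNNReal_add (by linarith) (by linarith), ← Real.toNNReal_add (by linarith) (by linarith)]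
    ring_nf; simp
  unfold stepMeasure
  simp only [Measure.coe_add, Measure.coe_nnreal_smul_apply, Pi.add_apply, measure_univ, mul_one]
  exact_mod_cast this

theorem step_integrable (d : ℕ) (f : ℝ → ℝ) : Integrable f (stepMeasure d) := by
  unfold stepMeasure
  have h : ∀ x : ℝ, Integrable f (Measure.dirac x) := fun x => integrable_dirac (by simp)
  exact (((h _).smul_measure_nnreal).add_measure ((h _).smul_measure_nnreal)).add_measure ((h _).smul_measure_nnreal)

theorem step_integral (d : ℕ) (f : ℝ → ℝ) :
    ∫ x, f x ∂(stepMeasure d) = pp d / 2 * f 1 + pp d / 2 * f (-1) + (1 - pp d) * f 0 := by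
  have h1 := pp_pos d
  have h2 := pp_le_one d
  unfold stepMeasure
  have h : ∀ x : ℝ, Integrable f (Measure.dirac x) := fun x => integrable_dirac (by simp)
  rw [integral_add_measure (((h _).smul_measure_nnreal).add_measure ((h _).smul_measure_nnreal)) ((h _).smul_measure_nnreal),
    integral_add_measure ((h _).smul_measure_nnreal) ((h _).smul_measure_nnreal)]
  simp only [integral_smul_nnreal_measure, integral_dirac, NNReal.smul_def, smul_eq_mul]
  rw [Real.coe_toNNReal _ (by linarith), Real.coe_toNNReal _ (by linarith)]

theorem eval_integrable (d k : ℕ) (f : ℝ → ℝ) (hf : Measurable f) (j : CubeIdx d k) :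
    Integrable (fun ω : CubeIdx d k → ℝ => f (ω j)) (prodMeasure d k) :=
  (measurePreserving_eval (fun _ : CubeIdx d k => stepMeasure d) j).integrable_comp_of_integrable
    (step_integrable d f)

theorem eval_integral (d k : ℕ) (f : ℝ → ℝ) (hf : Measurable f) (j : CubeIdx d k) :
    ∫ ω : CubeIdx d k → ℝ, f (ω j) ∂(prodMeasure d k) = ∫ x, f x ∂(stepMeasure d) := by
  have h := measurePreserving_eval (fun _ : CubeIdx d k => stepMeasure d) j
  rw [← h.map_eq, integral_map h.measurable.aemeasurable hf.aestronglyMeasurable]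
  rfl

theorem vol_nonneg' (n d : ℕ) (A : Finset (GridPt n d)) : 0 ≤ Vol n d A := by
  unfold Vol; positivity

theorem sum_vol (n d k : ℕ) (hkn : k ≤ n) (A : Finset (GridPt n d)) :
    ∑ j : CubeIdx d k, Vol n d (A ∩ cube n d k j) = Vol n d A := by
  unfold Vol
  rw [← Finset.sum_div]
  congr 1
  norm_cast
  have hlt : ∀ (x : GridPt n d) i, (x i : ℕ) / 2^(n-k) < 2^k := by
    intro x i
    rw [Nat.div_lt_iff_lt_mul (by positivity), ← pow_add, Nat.add_sub_cancel' hkn]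
    exact (x i).2
  rw [Finset.card_eq_sum_card_fiberwise (s := A) (f := fun x => (fun i => ⟨(x i : ℕ) / 2^(n-k), hlt x i⟩ : CubeIdx d k)) (t := Finset.univ) (by intro x _; simp)]
  refine Finset.sum_congr rfl fun j _ => ?_
  congr 1
  ext x
  simp only [Finset.mem_inter, cube, Finset.mem_filter, Finset.mem_univ, true_and, funext_iff, Fin.ext_iff]

theorem vol_cube_le (n d k : ℕ) (hkn : k ≤ n) (A : Finset (GridPt n d)) (j : CubeIdx d k) :
    Vol n d (A ∩ cube n d k j) ≤ ((2:ℝ)^(k*d))⁻¹ := by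
  have hc : (A ∩ cube n d k j).card ≤ 2^((n-k)*d) := by
    refine (Finset.card_le_card Finset.inter_subset_right).trans ?_
    have : (cube n d k j).card ≤ (Finset.univ : Finset (Fin d → Fin (2^(n-k)))).card := by
      refine Finset.card_le_card_of_injOn (fun x i => ⟨(x i : ℕ) % 2^(n-k), Nat.mod_lt _ (by positivity)⟩) (by intro x _; simp) ?_
      intro x hx y hy h
      simp only [cube, Finset.coe_filter, Finset.mem_univ, true_and, Set.mem_ofPred_eq] at hx hy
      funext i
      have h' := congrFun h i
      simp only [Fin.mk.injEq] at h'
      apply Fin.ext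
      rw [← Nat.div_add_mod (x i : ℕ) (2^(n-k)), ← Nat.div_add_mod (y i : ℕ) (2^(n-k)), h', hx i, hy i]
    simpa [← pow_mul] using this
  unfold Vol
  rw [div_le_iff₀ (by positivity)]
  have e : ((2:ℝ)^(k*d))⁻¹ * 2^(n*d) = 2^((n-k)*d) := by
    rw [show n * d = k*d + (n-k)*d by rw [← add_mul, Nat.add_sub_cancel' hkn], pow_add]
    field_simp
  rw [e]
  exact_mod_cast hc

theorem first_moment (n d k : ℕ) (hkn : k ≤ n) (A : Finset (GridPt n d)) :
    ∫ ω, |muMeas n d k A ω| ∂(prodMeasure d k) ≤ 2^k * Vol n d A := by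
  have hp := pp_pos d
  have hint : ∀ j ∈ (Finset.univ : Finset (CubeIdx d k)), Integrable (fun ω : CubeIdx d k → ℝ => (pp d)⁻¹ * 2^k * Vol n d (A ∩ cube n d k j) * |ω j|) (prodMeasure d k) :=
    fun j _ => (eval_integrable d k (fun x => |x|) (by fun_prop) j).const_mul _
  calc ∫ ω, |muMeas n d k A ω| ∂(prodMeasure d k)
      ≤ ∫ ω, ∑ j : CubeIdx d k, (pp d)⁻¹ * 2^k * Vol n d (A ∩ cube n d k j) * |ω j| ∂(prodMeasure d k) := by
        refine integral_mono_of_nonneg (Filter.Eventually.of_forall fun ω => abs_nonneg _) (integrable_finsetSum _ hint) (Filter.Eventually.of_forall fun ω => ?_)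
        unfold muMeas
        refine (Finset.abs_sum_le_sum_abs _ _).trans (Finset.sum_le_sum fun j _ => ?_)
        have := vol_nonneg' n d (A ∩ cube n d k j)
        rw [abs_mul, abs_mul, abs_of_nonneg this, abs_of_nonneg (by positivity : 0 ≤ (pp d)⁻¹ * 2^k)]
        apply le_of_eq; ring
    _ = ∑ j : CubeIdx d k, (pp d)⁻¹ * 2^k * Vol n d (A ∩ cube n d k j) * pp d := by
        rw [integral_finsetSum _ hint]
        refine Finset.sum_congr rfl fun j _ => ?_
        rw [integral_const_mul, eval_integral d k (fun x => |x|) (by fun_prop) j, step_integral]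
        congr 1
        simp
    _ = 2^k * Vol n d A := by
        rw [← sum_vol n d k hkn A, Finset.mul_sum]
        refine Finset.sum_congr rfl fun j _ => ?_
        field_simp

theorem second_moment (n d k : ℕ) (hkn : k ≤ n) (A : Finset (GridPt n d)) :
    (∫ ω, |muMeas n d k A ω| ∂(prodMeasure d k))^2 ≤ (pp d)⁻¹ * (2^k)^2 * (((2:ℝ)^(k*d))⁻¹ * Vol n d A) := by
  have hp := pp_pos d
  haveI : IsProbabilityMeasure (prodMeasure d k) := by unfold prodMeasure; infer_instance
  let c : CubeIdx d k → ℝ := fun j => (pp d)⁻¹ * 2^k * Vol n d (A ∩ cube n d k j)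
  have hmem : ∀ j, MemLp (fun x : ℝ => c j * x) 2 (stepMeasure d) := by
    intro j
    rw [memLp_two_iff_integrable_sq (by fun_prop)]
    exact step_integrable d _
  have hmem' : ∀ j, MemLp (fun ω : CubeIdx d k → ℝ => c j * ω j) 2 (prodMeasure d k) := by
    intro j
    exact (hmem j).comp_measurePreserving (measurePreserving_eval (fun _ : CubeIdx d k => stepMeasure d) j)
  have hmu : muMeas n d k A = ∑ j, fun ω : CubeIdx d k → ℝ => c j * ω j := by
    funext ω
    simp only [muMeas, Finset.sum_apply, c]
    exact Finset.sum_congr rfl fun j _ => by ring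
  have hmemu : MemLp (muMeas n d k A) 2 (prodMeasure d k) := by
    rw [hmu]; exact memLp_finsetSum' _ fun j _ => hmem' j
  have hmean : ∫ ω, muMeas n d k A ω ∂(prodMeasure d k) = 0 := by
    rw [hmu]
    simp only [Finset.sum_apply]
    rw [integral_finsetSum _ fun j _ => (hmem' j).integrable (by norm_num)]
    refine Finset.sum_eq_zero fun j _ => ?_
    rw [eval_integral d k (fun x => c j * x) (by fun_prop) j, step_integral]
    ring
  have hvar : ProbabilityTheory.variance (muMeas n d k A) (prodMeasure d k) = ∑ j, c j ^ 2 * pp d := by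
    rw [hmu]
    unfold prodMeasure
    rw [ProbabilityTheory.variance_sum_pi hmem]
    refine Finset.sum_congr rfl fun j _ => ?_
    rw [ProbabilityTheory.variance_of_integral_eq_zero (by fun_prop) (by rw [step_integral]; ring), step_integral]
    ring
  have hsq : ∫ ω, (muMeas n d k A ω)^2 ∂(prodMeasure d k) = ∑ j, c j ^ 2 * pp d := by
    rw [← hvar, ProbabilityTheory.variance_of_integral_eq_zero hmemu.aestronglyMeasurable.aemeasurable hmean]
  have hcs : (∫ ω, |muMeas n d k A ω| ∂(prodMeasure d k))^2 ≤ ∫ ω, (muMeas n d k A ω)^2 ∂(prodMeasure d k) := by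
    have h1 := ProbabilityTheory.variance_nonneg (fun ω => |muMeas n d k A ω|) (prodMeasure d k)
    have h2 : MemLp (fun ω => |muMeas n d k A ω|) 2 (prodMeasure d k) := hmemu.abs
    rw [ProbabilityTheory.variance_eq_sub h2] at h1
    simp only [Pi.pow_apply, sq_abs] at h1
    linarith
  rw [hsq] at hcs
  refine hcs.trans ?_
  rw [← sum_vol n d k hkn A, Finset.mul_sum, Finset.mul_sum]
  refine Finset.sum_le_sum fun j _ => ?_
  have h1 := vol_nonneg' n d (A ∩ cube n d k j)
  have h2 := vol_cube_le n d k hkn A j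
  calc c j ^ 2 * pp d = (pp d)⁻¹ * (2^k)^2 * (Vol n d (A ∩ cube n d k j) * Vol n d (A ∩ cube n d k j)) := by
        simp only [c]; field_simp
    _ ≤ _ := by gcongr

theorem final_arith (d k m : ℕ) (hd : 3 ≤ d) (hk : 8 ≤ k) (v V E P : ℝ) (hv : 0 < v)
    (hvd : v ^ d = V) (hV : V ≤ 1/2) (hm₁ : (2:ℝ) ^ (-(m:ℝ)) < v) (hm₂ : v ≤ (2:ℝ) ^ ((1:ℝ) - (m:ℝ)))
    (hP : v ^ (d-1) * (1 - v) ≤ P) (hE1 : E ≤ 2^k * V)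
    (hE2 : E^2 ≤ (pp d)⁻¹ * (2^k)^2 * (((2:ℝ)^(k*d))⁻¹ * V)) :
    E ≤ 2^10 * (2:ℝ) ^ (-(|(m:ℝ) - (k:ℝ)| / 2)) * P := by
  have hd' : (3:ℝ) ≤ d := by exact_mod_cast hd
  have hk' : (8:ℝ) ≤ k := by exact_mod_cast hk
  have hv1 : v < 1 := by
    by_contra h
    push Not at h
    have := one_le_pow₀ h (n := d)
    linarith
  have hm1 : 1 ≤ m := by
    rcases Nat.eq_zero_or_pos m with h | h
    · subst h; simp at hm₁; linarith
    · exact h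
  have hm1' : (1:ℝ) ≤ m := by exact_mod_cast hm1
  have half : 2 ≤ m → (1:ℝ)/2 ≤ 1 - v := by
    intro h
    have h' : (2:ℝ) ≤ m := by exact_mod_cast h
    have : (2:ℝ) ^ ((1:ℝ) - (m:ℝ)) ≤ (2:ℝ)^(-1:ℝ) := Real.rpow_le_rpow_of_exponent_le (by norm_num) (by linarith)
    rw [Real.rpow_neg_one] at this
    linarith
  have hc : (2:ℝ)^10 = (2:ℝ)^(10:ℝ) := by norm_cast
  have hw : 0 < v^(d-1) := by positivity
  -- it suffices to compare with the lower bound for P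
  suffices h : ∃ q : ℝ, (2:ℝ)^q ≤ 1 - v ∧ ∃ r : ℝ, E ≤ 2^r * v^(d-1) ∧ r ≤ 10 - |(m:ℝ) - (k:ℝ)| / 2 + q by
    obtain ⟨q, hq, r, hr, hrq⟩ := h
    calc E ≤ 2^r * v^(d-1) := hr
      _ ≤ 2^(10 - |(m:ℝ) - (k:ℝ)| / 2 + q) * v^(d-1) := by
          gcongr; norm_num
      _ = 2^10 * (2:ℝ) ^ (-(|(m:ℝ) - (k:ℝ)| / 2)) * (v^(d-1) * 2^q) := by
          rw [hc, Real.rpow_add (by norm_num), sub_eq_add_neg, Real.rpow_add (by norm_num)]; ring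
      _ ≤ 2^10 * (2:ℝ) ^ (-(|(m:ℝ) - (k:ℝ)| / 2)) * (v^(d-1) * (1 - v)) := by gcongr
      _ ≤ _ := by gcongr
  rcases le_or_gt k (m+3) with hkm | hkm
  · have hkm' : (k:ℝ) ≤ m + 3 := by exact_mod_cast hkm
    refine ⟨-1, ?_, (k:ℝ) + (1 - m), ?_, ?_⟩
    · have := half (by omega)
      rw [Real.rpow_neg_one]; linarith
    · refine hE1.trans ?_
      rw [Real.rpow_add (by norm_num), Real.rpow_natCast, ← hvd]
      calc (2:ℝ)^k * v^d = 2^k * v * v^(d-1) := by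
            rw [mul_assoc, ← pow_succ', Nat.sub_add_cancel (by omega)]
        _ ≤ _ := by gcongr
    · rcases abs_cases ((m:ℝ) - k) with ⟨h, _⟩ | ⟨h, _⟩ <;> rw [h] <;> linarith
  · have hkm' : (m:ℝ) + 4 ≤ k := by exact_mod_cast hkm
    have hab : |(m:ℝ) - k| = k - m := by rw [abs_of_nonpos (by linarith)]; ring
    have hE : E ≤ 2^(2*(d:ℝ) - (k-m) * (d/2-1)) * v^(d-1) := by
      refine le_of_sq_le_sq ?_ (by positivity)
      refine hE2.trans ?_
      have hvm : ((2:ℝ)^(m:ℝ))⁻¹ ≤ v := by rw [← Real.rpow_neg (by norm_num)]; exact hm₁.le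
      have h1 : (1:ℝ) ≤ v * 2^m := by
        rw [Real.rpow_natCast] at hvm
        rw [inv_le_iff_one_le_mul₀ (by positivity)] at hvm
        linarith
      have h2 : v^d ≤ (2^m)^(d-2) * (v^(d-1))^2 := by
        calc v^d = v^d * 1 := by ring
          _ ≤ v^d * (v * 2^m)^(d-2) := by
            gcongr; exact one_le_pow₀ h1
          _ = _ := by
            obtain ⟨e, rfl⟩ : ∃ e, d = e + 2 := ⟨d-2, by omega⟩
            simp only [Nat.add_sub_cancel, show e + 2 - 1 = e + 1 by omega]
            rw [mul_pow]; ring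
      have h3 : ((2:ℝ)^(2*(d:ℝ) - (k-m) * (d/2-1)))^2 = 2^(4*d) * (2^k)^2 * ((2:ℝ)^(k*d))⁻¹ * (2^m)^(d-2) := by
        have hd2 : ((d-2:ℕ):ℝ) = d - 2 := by push_cast [show 2 ≤ d by omega]; ring
        have e2 : (0:ℝ) < 2 := by norm_num
        simp only [← Real.rpow_natCast, ← Real.rpow_mul e2.le]
        rw [← Real.rpow_neg e2.le, ← Real.rpow_add e2, ← Real.rpow_add e2, ← Real.rpow_add e2]
        congr 1
        push_cast
        rw [hd2]
        ring
      rw [mul_pow, h3, pp, inv_inv, ← hvd]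
      calc (2:ℝ)^(4*d) * (2^k)^2 * (((2:ℝ)^(k*d))⁻¹ * v^d) ≤ (2:ℝ)^(4*d) * (2^k)^2 * (((2:ℝ)^(k*d))⁻¹ * ((2^m)^(d-2) * (v^(d-1))^2)) := by gcongr
        _ = _ := by ring
    rcases Nat.lt_or_ge m 2 with h | h
    · have hm : m = 1 := by omega
      subst hm
      refine ⟨-(d:ℝ), ?_, _, hE, ?_⟩
      · have hb := one_add_mul_le_pow (a := -(1/(2*(d:ℝ)))) (by
          have : 1/(2*(d:ℝ)) ≤ 1 := by rw [div_le_one (by positivity)]; linarith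
          linarith) d
        have e : 1 + (d:ℝ) * -(1/(2*(d:ℝ))) = 1/2 := by field_simp; norm_num
        rw [e] at hb
        have hvle : v ≤ 1 + -(1/(2*(d:ℝ))) := by
          have : 1/(2*(d:ℝ)) ≤ 1 := by rw [div_le_one (by positivity)]; linarith
          refine le_of_pow_le_pow_left₀ (n := d) (by omega) (by linarith) ?_
          linarith
        have h2d : 2 * (d:ℝ) ≤ 2^d := by
          have : ∀ j : ℕ, 2 * (j + 1) ≤ 2^(j+1) := by
            intro j
            induction j with
            | zero => simp
            | succ j ih => rw [pow_succ]; omega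
          have := this (d-1)
          rw [Nat.sub_add_cancel (by omega)] at this
          exact_mod_cast this
        rw [Real.rpow_neg (by norm_num), Real.rpow_natCast]
        have : ((2:ℝ)^d)⁻¹ ≤ (2*(d:ℝ))⁻¹ := by gcongr
        rw [← one_div (2*(d:ℝ))] at this
        linarith
      · rw [hab]; push_cast at *; nlinarith
    · refine ⟨-1, ?_, _, hE, ?_⟩
      · have := half h
        rw [Real.rpow_neg_one]; linarith
      · rw [hab]; nlinarith

/-- `E[|μ_k(A)|] ≤ 2^{10}·2^{-|m(A)-k|/2}·Per(A)` for `8 ≤ k ≤ n`, where `m(A) ∈ ℕ`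
satisfies `2^{-m(A)} < Vol(A)^{1/d} ≤ 2^{-m(A)+1}`. -/
theorem expected_mu_le (n d k : ℕ) (hd : 3 ≤ d) (hk : 8 ≤ k) (hkn : k ≤ n)
    (A : Finset (GridPt n d)) (hA : A.Nonempty) (hVol : Vol n d A ≤ 1/2)
    (m : ℕ) (hm₁ : (2:ℝ) ^ (-(m:ℝ)) < Vol n d A ^ ((1:ℝ)/(d:ℝ)))
    (hm₂ : Vol n d A ^ ((1:ℝ)/(d:ℝ)) ≤ (2:ℝ) ^ ((1:ℝ) - (m:ℝ))) :
    ∫ ω, |muMeas n d k A ω| ∂(prodMeasure d k)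
      ≤ 2^10 * (2:ℝ) ^ (-(|(m:ℝ) - (k:ℝ)| / 2)) * Per n d A := by

  have hV0 : 0 < Vol n d A := by
    unfold Vol
    have : (0:ℝ) < (A.card : ℝ) := by exact_mod_cast hA.card_pos
    positivity
  have hv : 0 < Vol n d A ^ ((1:ℝ)/(d:ℝ)) := Real.rpow_pos_of_pos hV0 _
  have hvd : (Vol n d A ^ ((1:ℝ)/(d:ℝ))) ^ d = Vol n d A := by
    rw [one_div]; exact Real.rpow_inv_natCast_pow hV0.le (by omega)
  exact final_arith d k m hd hk _ _ _ _ hv hvd hVol hm₁ hm₂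
    (per_lower n d (by omega) A hA _ hv hvd) (first_moment n d k hkn A) (second_moment n d k hkn A)
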